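/- arXiv:2012.08873 — 2 statements merged into one kernel-verified Lean document; each statement's English description precedes it below -/
import Mathlib

section
/- Let g_1,…,g_m ∈ ℝ[x] be such that g_m = R − ‖x‖₂² for some real R > 0. Then for every integer k ≥ max_i ⌈g_i⌉ and every real c > 0 there exist symmetric positive definite matrices G_0 (indexed by ℕ^n_k) and G_i (indexed by ℕ^n_{k-⌈g_i⌉}), i ∈ {1,…,m}, such that c = v_k^T G_0 v_k + Σ_{i=1}^m g_i · v_{k-⌈g_i⌉}^T G_i v_{k-⌈g_i⌉} holds as an identity in ℝ[x]. (That is, ℝ^{>0} ⊆ Q_k°(g), the interior of the truncated quadratic module, for all such k.) -/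
open MvPolynomial

/-- `⌈p⌉ := ⌈deg(p)/2⌉`. -/
noncomputable def halfCeil {n : ℕ} (p : MvPolynomial (Fin n) ℝ) : ℕ :=
  (p.totalDegree + 1) / 2

/-- The finite set `ℕ^n_d` of multi-indices `α ∈ ℕ^n` with `|α| ≤ d`. -/
noncomputable def degLE (n d : ℕ) : Finset (Fin n →₀ ℕ) :=
  (Finset.Iic (Finsupp.equivFunOnFinite.symm fun _ : Fin n => d)).filter
    fun α => (∑ i, α i) ≤ d

/-- The polynomial `v_d^T G v_d = Σ_{α,β ∈ ℕ^n_d} G_{α,β} x^{α+β}` associated with a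
matrix `G` indexed by `ℕ^n_d`. -/
noncomputable def quadForm (n d : ℕ)
    (G : Matrix ↥(degLE n d) ↥(degLE n d) ℝ) : MvPolynomial (Fin n) ℝ :=
  ∑ α : ↥(degLE n d), ∑ β : ↥(degLE n d), monomial (α.1 + β.1) (G α β)

/-- The moment matrix `M_d(y)`, with entries `(M_d(y))_{α,β} = y_{α+β}`. -/
noncomputable def momentMat (n d : ℕ) (y : (Fin n →₀ ℕ) → ℝ) :
    Matrix ↥(degLE n d) ↥(degLE n d) ℝ :=
  Matrix.of fun α β => y (α.1 + β.1)

/-- The localizing matrix `M_d(q·y)`, with entries `Σ_γ q_γ y_{α+β+γ}`. -/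
noncomputable def locMat (n d : ℕ) (q : MvPolynomial (Fin n) ℝ)
    (y : (Fin n →₀ ℕ) → ℝ) : Matrix ↥(degLE n d) ↥(degLE n d) ℝ :=
  Matrix.of fun α β => ∑ γ ∈ q.support, coeff γ q * y (α.1 + β.1 + γ)

/-!
Substituting `y_i = x_i²` turns the ball polynomial into `R − σ` with `σ = Σ y_i`. Since
`c = c/2 + c/(2R) · (R − σ) + σ · c/(2R)`, a representation `c/(2R) = p + (R − σ) q` in degree `d`
yields `c = (c/2 + σ p) + (R − σ) (c/(2R) + σ q)` in degree `d + 1`, and multiplication by `σ`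
followed by adding a positive constant keeps all coefficients positive. The resulting polynomials
in the `x_i²` have positive definite diagonal Gram matrices, so `c = p + g_m q` with `p` and `q` in
the interior of the respective cones. The other constraints are then given small multiples of the
identity matrix; as being positive definite is an open condition, `p` absorbs the error.
-/

section PosDefPerturbation

open scoped MatrixOrder ComplexOrder

variable {ι 𝕜 : Type*} [Finite ι] [RCLike 𝕜] {A B : Matrix ι ι 𝕜}

theorem exists_pos_smul_one_le_of_posDef [DecidableEq ι] (hA : A.PosDef) :
    ∃ δ : ℝ, 0 < δ ∧ δ • (1 : Matrix ι ι 𝕜) ≤ A := by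
  cases nonempty_fintype ι
  have hev : ∀ᶠ δ in nhdsWithin (0 : ℝ) (Set.Ioi 0), ∀ x ∈ spectrum ℝ A, δ ≤ x :=
    (Filter.eventually_all_finite A.finite_real_spectrum).2 fun x hx =>
      (eventually_le_nhds (hA.isStrictlyPositive.spectrum_pos hx)).filter_mono nhdsWithin_le_nhds
  obtain ⟨δ, hδA, hδ⟩ := (hev.and self_mem_nhdsWithin).exists
  refine ⟨δ, hδ, ?_⟩
  rw [← Algebra.algebraMap_eq_smul_one]
  exact algebraMap_le_of_le_spectrum hδA hA.isHermitian

theorem exists_le_pos_smul_one_of_isHermitian [DecidableEq ι] (hB : B.IsHermitian) :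
    ∃ M : ℝ, 0 < M ∧ B ≤ M • (1 : Matrix ι ι 𝕜) := by
  cases nonempty_fintype ι
  obtain ⟨M, hM⟩ := B.finite_real_spectrum.bddAbove
  refine ⟨max M 1, by positivity, ?_⟩
  rw [← Algebra.algebraMap_eq_smul_one]
  exact le_algebraMap_of_spectrum_le (fun x hx => (hM hx).trans (le_max_left _ _)) hB

theorem exists_pos_posDef_sub_smul (hA : A.PosDef) (hB : B.IsHermitian) :
    ∃ ε : ℝ, 0 < ε ∧ (A - ε • B).PosDef := by
  classical
  obtain ⟨δ, hδ, hδA⟩ := exists_pos_smul_one_le_of_posDef hA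
  obtain ⟨M, hM, hBM⟩ := exists_le_pos_smul_one_of_isHermitian hB
  refine ⟨δ / (2 * M), by positivity, ?_⟩
  have hsplit : A - (δ / (2 * M)) • B =
      (δ / 2) • (1 : Matrix ι ι 𝕜) + ((A - δ • 1) + (δ / (2 * M)) • (M • 1 - B)) := by
    have hM' : δ / (2 * M) * M = δ / 2 := by field_simp
    rw [smul_sub, smul_smul, hM']
    module
  rw [hsplit]
  exact (Matrix.PosDef.one.smul (half_pos hδ)).add_posSemidef
    ((Matrix.le_iff.1 hδA).add ((Matrix.le_iff.1 hBM).smul (by positivity)))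

end PosDefPerturbation

/-- `f` has degree at most `d` and all its coefficients up to that degree are positive. Such an `f`,
evaluated at the squares of the variables, has a positive definite diagonal Gram matrix. -/
def HasPosCoeffs {σ 𝕜 : Type*} [CommSemiring 𝕜] [PartialOrder 𝕜] (d : ℕ)
    (f : MvPolynomial σ 𝕜) : Prop :=
  f.totalDegree ≤ d ∧ ∀ α : σ →₀ ℕ, α.degree ≤ d → 0 < coeff α f

section HasPosCoeffs

variable {σ 𝕜 : Type*} [CommSemiring 𝕜]

theorem isHomogeneous_sum_X [Fintype σ] : (∑ i, X i : MvPolynomial σ 𝕜).IsHomogeneous 1 :=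
  IsHomogeneous.sum _ _ _ fun i _ => isHomogeneous_X 𝕜 i

theorem coeff_sum_X_mul [Fintype σ] (f : MvPolynomial σ 𝕜) (α : σ →₀ ℕ) :
    coeff α ((∑ i, X i) * f) = ∑ i ∈ α.support, coeff (α - Finsupp.single i 1) f := by
  classical
  simp only [Finset.sum_mul, coeff_sum, coeff_X_mul', Finset.sum_ite_mem, Finset.univ_inter]

variable [PartialOrder 𝕜] {d : ℕ} {f : MvPolynomial σ 𝕜} {a : 𝕜}

theorem hasPosCoeffs_C (hd : ∀ α : σ →₀ ℕ, α.degree ≤ d → α = 0) (ha : 0 < a) :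
    HasPosCoeffs d (C a : MvPolynomial σ 𝕜) := by
  refine ⟨by simp only [totalDegree_C, Nat.zero_le], fun α hα => ?_⟩
  simpa only [hd α hα, coeff_zero_C] using ha

variable [Fintype σ] [IsOrderedCancelAddMonoid 𝕜]

theorem HasPosCoeffs.coeff_sum_X_mul_pos (hf : HasPosCoeffs d f) {α : σ →₀ ℕ} (hα0 : α ≠ 0)
    (hα : α.degree ≤ d + 1) : 0 < coeff α ((∑ i, X i) * f) := by
  rw [coeff_sum_X_mul]
  refine Finset.sum_pos (fun i hi => hf.2 _ ?_) (Finsupp.support_nonempty_iff.2 hα0)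
  have hle : Finsupp.single i 1 ≤ α := by
    rw [Finsupp.single_le_iff]
    exact Nat.one_le_iff_ne_zero.2 (Finsupp.mem_support_iff.1 hi)
  have hdeg := congrArg Finsupp.degree (tsub_add_cancel_of_le hle)
  rw [map_add, Finsupp.degree_single] at hdeg
  omega

theorem HasPosCoeffs.C_add_sum_X_mul (ha : 0 < a) (hf : HasPosCoeffs d f) :
    HasPosCoeffs (d + 1) (C a + (∑ i, X i) * f) := by
  constructor
  · have hC : (C a : MvPolynomial σ 𝕜).totalDegree = 0 := totalDegree_C a
    have hX : (∑ i, X i : MvPolynomial σ 𝕜).totalDegree ≤ 1 := isHomogeneous_sum_X.totalDegree_le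
    have hmul := totalDegree_mul (∑ i, X i) f
    have hf_deg := hf.1
    exact (totalDegree_add _ _).trans (max_le (by omega) (by omega))
  · classical
    intro α hα
    rw [coeff_add]
    rcases eq_or_ne α 0 with rfl | hα0
    · rwa [coeff_zero_C, coeff_sum_X_mul, Finsupp.support_zero, Finset.sum_empty, add_zero]
    · rw [coeff_C, if_neg hα0.symm, zero_add]
      exact hf.coeff_sum_X_mul_pos hα0 hα

end HasPosCoeffs

theorem C_eq_half_add_mul_add_mul {σ K : Type*} [Field K] [NeZero (2 : K)] {R : K} (hR : R ≠ 0)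
    (c : K) (s : MvPolynomial σ K) :
    C c = C (c / 2) + (C R - s) * C (c / (2 * R)) + s * C (c / (2 * R)) := by
  have hc : C c = (C (c / 2) + C R * C (c / (2 * R)) : MvPolynomial σ K) := by
    rw [← C_mul, ← C_add]
    congr 1
    field_simp
    ring
  linear_combination hc

theorem exists_hasPosCoeffs_C_eq_add_mul {σ K : Type*} [Fintype σ] [Field K] [LinearOrder K]
    [IsStrictOrderedRing K] {R : K} (hR : 0 < R) (d : ℕ) {c : K} (hc : 0 < c) :
    ∃ p q : MvPolynomial σ K, HasPosCoeffs (d + 1) p ∧ HasPosCoeffs d q ∧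
      C c = p + (C R - ∑ i, X i) * q := by
  have hc' : 0 < c / (2 * R) := by positivity
  have hsplit := C_eq_half_add_mul_add_mul hR.ne' c (∑ i : σ, X i)
  induction d generalizing c with
  | zero =>
    have hq : HasPosCoeffs 0 (C (c / (2 * R)) : MvPolynomial σ K) :=
      hasPosCoeffs_C (fun α hα => α.degree_eq_zero_iff.1 (Nat.le_zero.1 hα)) hc'
    exact ⟨_, _, hq.C_add_sum_X_mul (half_pos hc), hq, by linear_combination hsplit⟩
  | succ d ih =>
    obtain ⟨p, q, hp, hq, hpq⟩ := ih hc' (by positivity) (C_eq_half_add_mul_add_mul hR.ne' _ _)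
    exact ⟨_, _, hp.C_add_sum_X_mul (half_pos hc), hq.C_add_sum_X_mul hc',
      by linear_combination hsplit + (∑ i, X i) * hpq⟩

section GramMatrix

variable {n d : ℕ}

theorem mem_degLE {α : Fin n →₀ ℕ} : α ∈ degLE n d ↔ α.degree ≤ d := by
  rw [degLE, Finset.mem_filter, Finset.mem_Iic, Finsupp.degree_eq_sum, and_iff_right_iff_imp]
  exact fun h i => (Finset.single_le_sum (fun _ _ => Nat.zero_le _) (Finset.mem_univ i)).trans h

/-- The map `G ↦ v_d^T G v_d` as a linear map, so that its range is a subspace. -/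
noncomputable def quadFormLinearMap (n d : ℕ) :
    Matrix ↥(degLE n d) ↥(degLE n d) ℝ →ₗ[ℝ] MvPolynomial (Fin n) ℝ where
  toFun := quadForm n d
  map_add' A B := by simp only [quadForm, Matrix.add_apply, map_add, Finset.sum_add_distrib]
  map_smul' a A := by
    simp only [quadForm, Matrix.smul_apply, map_smul, Finset.smul_sum, RingHom.id_apply]

theorem quadForm_add (A B : Matrix ↥(degLE n d) ↥(degLE n d) ℝ) :
    quadForm n d (A + B) = quadForm n d A + quadForm n d B :=
  map_add (quadFormLinearMap n d) A B

theorem quadForm_sub (A B : Matrix ↥(degLE n d) ↥(degLE n d) ℝ) :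
    quadForm n d (A - B) = quadForm n d A - quadForm n d B :=
  map_sub (quadFormLinearMap n d) A B

theorem quadForm_smul (a : ℝ) (A : Matrix ↥(degLE n d) ↥(degLE n d) ℝ) :
    quadForm n d (a • A) = a • quadForm n d A :=
  map_smul (quadFormLinearMap n d) a A

theorem quadForm_transpose (A : Matrix ↥(degLE n d) ↥(degLE n d) ℝ) :
    quadForm n d A.transpose = quadForm n d A := by
  rw [quadForm, Finset.sum_comm]
  simp only [Matrix.transpose_apply, quadForm, add_comm]

theorem quadForm_single (α β : ↥(degLE n d)) (a : ℝ) :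
    quadForm n d (Matrix.single α β a) = monomial (α.1 + β.1) a := by
  rw [quadForm, Fintype.sum_eq_single α, Fintype.sum_eq_single β, Matrix.single_apply_same]
  · intro β' hβ'
    rw [Matrix.single_apply_of_col_ne α α hβ'.symm a, monomial_zero]
  · intro α' hα'
    exact Finset.sum_eq_zero fun β' _ => by
      rw [Matrix.single_apply_of_row_ne hα'.symm β β' a, monomial_zero]

theorem quadForm_diagonal_coeff {f : MvPolynomial (Fin n) ℝ} (hf : f.totalDegree ≤ d) :
    quadForm n d (Matrix.diagonal fun α => coeff α.1 f) = expand 2 f := by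
  have hsupp : f.support ⊆ degLE n d := fun α hα => mem_degLE.2 ((le_totalDegree hα).trans hf)
  have hsum : f = ∑ α ∈ degLE n d, monomial α (coeff α f) := by
    conv_lhs => rw [f.as_sum]
    refine Finset.sum_subset hsupp fun α _ hα => ?_
    rw [notMem_support_iff.1 hα, monomial_zero]
  conv_rhs => rw [hsum, ← Finset.sum_coe_sort]
  simp only [map_sum, expand_monomial, two_nsmul]
  refine Finset.sum_congr rfl fun α _ => ?_
  rw [Fintype.sum_eq_single α, Matrix.diagonal_apply_eq]
  intro β hβ
  rw [Matrix.diagonal_apply_ne _ hβ.symm, monomial_zero]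

theorem totalDegree_quadForm_le (A : Matrix ↥(degLE n d) ↥(degLE n d) ℝ) :
    (quadForm n d A).totalDegree ≤ 2 * d := by
  refine totalDegree_finsetSum_le fun α _ => totalDegree_finsetSum_le fun β _ => ?_
  calc (monomial (α.1 + β.1) (A α β)).totalDegree ≤ (α.1 + β.1).degree :=
        totalDegree_monomial_le _ _
    _ = α.1.degree + β.1.degree := map_add _ _ _
    _ ≤ 2 * d := by
        have hα := mem_degLE.1 α.2
        have hβ := mem_degLE.1 β.2
        omega

theorem exists_quadForm_eq_monomial {γ : Fin n →₀ ℕ} (hγ : γ.degree ≤ 2 * d) (a : ℝ) :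
    ∃ A, quadForm n d A = monomial γ a := by
  obtain ⟨α, hαγ, hα⟩ := Finsupp.exists_le_degree_eq γ (min d γ.degree) (min_le_right _ _)
  obtain ⟨β, rfl⟩ := exists_add_of_le hαγ
  have hadd : (α + β).degree = α.degree + β.degree := map_add _ _ _
  exact ⟨_, quadForm_single ⟨α, mem_degLE.2 (by omega)⟩ ⟨β, mem_degLE.2 (by omega)⟩ a⟩

theorem exists_quadForm_eq {f : MvPolynomial (Fin n) ℝ} (hf : f.totalDegree ≤ 2 * d) :
    ∃ A, quadForm n d A = f := by
  change f ∈ (quadFormLinearMap n d).range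
  rw [f.as_sum]
  exact Submodule.sum_mem _ fun γ hγ => exists_quadForm_eq_monomial ((le_totalDegree hγ).trans hf) _

theorem exists_isHermitian_quadForm_eq {f : MvPolynomial (Fin n) ℝ} (hf : f.totalDegree ≤ 2 * d) :
    ∃ A, A.IsHermitian ∧ quadForm n d A = f := by
  obtain ⟨A, rfl⟩ := exists_quadForm_eq hf
  refine ⟨(2⁻¹ : ℝ) • (A + A.transpose), ?_, ?_⟩
  · simp only [Matrix.IsHermitian, Matrix.conjTranspose_eq_transpose_of_trivial,
      Matrix.transpose_smul, Matrix.transpose_add, Matrix.transpose_transpose, add_comm]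
  · rw [quadForm_smul, quadForm_add, quadForm_transpose]
    module

end GramMatrix

section PosDefForms

variable {n d : ℕ} {p q f : MvPolynomial (Fin n) ℝ}

/-- The cone of polynomials `v_d^T G v_d` with `G` positive definite, that is, the interior of the
cone of sums of squares of degree at most `2d`. -/
def posDefForms (n d : ℕ) : Set (MvPolynomial (Fin n) ℝ) :=
  {p | ∃ G : Matrix ↥(degLE n d) ↥(degLE n d) ℝ, G.PosDef ∧ quadForm n d G = p}

theorem posDefForms_nonempty (n d : ℕ) : (posDefForms n d).Nonempty :=
  ⟨_, 1, Matrix.PosDef.one, rfl⟩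

theorem smul_mem_posDefForms {a : ℝ} (ha : 0 < a) (hp : p ∈ posDefForms n d) :
    a • p ∈ posDefForms n d := by
  obtain ⟨G, hG, rfl⟩ := hp
  exact ⟨a • G, hG.smul ha, quadForm_smul a G⟩

theorem totalDegree_le_of_mem_posDefForms (hp : p ∈ posDefForms n d) : p.totalDegree ≤ 2 * d := by
  obtain ⟨G, -, rfl⟩ := hp
  exact totalDegree_quadForm_le G

theorem exists_pos_sub_smul_mem_posDefForms (hp : p ∈ posDefForms n d)
    (hf : f.totalDegree ≤ 2 * d) : ∃ ε : ℝ, 0 < ε ∧ p - ε • f ∈ posDefForms n d := by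
  obtain ⟨G, hG, rfl⟩ := hp
  obtain ⟨B, hB, rfl⟩ := exists_isHermitian_quadForm_eq hf
  obtain ⟨ε, hε, hpos⟩ := exists_pos_posDef_sub_smul hG hB
  exact ⟨ε, hε, G - ε • B, hpos, by rw [quadForm_sub, quadForm_smul]⟩

theorem HasPosCoeffs.expand_two_mem_posDefForms (hf : HasPosCoeffs d f) :
    expand 2 f ∈ posDefForms n d :=
  ⟨_, Matrix.PosDef.diagonal fun α => hf.2 α.1 (mem_degLE.1 α.2), quadForm_diagonal_coeff hf.1⟩

end PosDefForms

section QuadraticModule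

variable {n k : ℕ} {ι : Type*} [Fintype ι] {g : ι → MvPolynomial (Fin n) ℝ}
  {p q : MvPolynomial (Fin n) ℝ}

/-- The interior `Q_k°(g)` of the truncated quadratic module generated by the family `g`, described
by positive definite Gram matrices. The description is meant for `k ≥ max_i ⌈g_i⌉`, since otherwise
`k - ⌈g_i⌉` is truncated to `0`. -/
def truncQuadModuleInterior (k : ℕ) (g : ι → MvPolynomial (Fin n) ℝ) :
    Set (MvPolynomial (Fin n) ℝ) :=
  {f | ∃ p ∈ posDefForms n k, ∃ q : ι → MvPolynomial (Fin n) ℝ,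
    (∀ i, q i ∈ posDefForms n (k - halfCeil (g i))) ∧ f = p + ∑ i, g i * q i}

theorem totalDegree_mul_le_of_mem_posDefForms {f : MvPolynomial (Fin n) ℝ} (hf : halfCeil f ≤ k)
    (hq : q ∈ posDefForms n (k - halfCeil f)) : (f * q).totalDegree ≤ 2 * k := by
  have hmul := totalDegree_mul f q
  have hq_deg := totalDegree_le_of_mem_posDefForms hq
  have hf_deg : f.totalDegree ≤ 2 * halfCeil f := by
    rw [halfCeil]
    omega
  omega

theorem add_mul_mem_truncQuadModuleInterior (hk : ∀ i, halfCeil (g i) ≤ k)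
    (hp : p ∈ posDefForms n k) (j : ι) (hq : q ∈ posDefForms n (k - halfCeil (g j))) :
    p + g j * q ∈ truncQuadModuleInterior k g := by
  classical
  choose e he using fun i => posDefForms_nonempty n (k - halfCeil (g i))
  have hdeg : (∑ i ∈ Finset.univ.erase j, g i * e i).totalDegree ≤ 2 * k :=
    totalDegree_finsetSum_le fun i _ => totalDegree_mul_le_of_mem_posDefForms (hk i) (he i)
  obtain ⟨ε, hε, hpε⟩ := exists_pos_sub_smul_mem_posDefForms hp hdeg
  refine ⟨_, hpε, Function.update (ε • e) j q, fun i => ?_, ?_⟩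
  · rcases eq_or_ne i j with rfl | hij
    · rwa [Function.update_self]
    · rw [Function.update_of_ne hij]
      exact smul_mem_posDefForms hε (he i)
  · have hrest : ∑ i ∈ Finset.univ.erase j, g i * Function.update (ε • e) j q i =
        ε • ∑ i ∈ Finset.univ.erase j, g i * e i := by
      rw [Finset.smul_sum]
      refine Finset.sum_congr rfl fun i hi => ?_
      rw [Function.update_of_ne (Finset.ne_of_mem_erase hi), Pi.smul_apply, mul_smul_comm]
    rw [← Finset.add_sum_erase _ _ (Finset.mem_univ j), Function.update_self, hrest]
    abel

end QuadraticModule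

section Ball

variable {n : ℕ}

theorem totalDegree_C_sub_sum_X {σ A : Type*} [Fintype σ] [Nonempty σ] [CommRing A] [Nontrivial A]
    (r : A) : (C r - ∑ i, X i : MvPolynomial σ A).totalDegree = 1 := by
  classical
  have hne : (∑ i, X i : MvPolynomial σ A) ≠ 0 := by
    intro h
    simpa using congrArg (eval (Pi.single (Classical.arbitrary σ) 1)) h
  have hdeg := isHomogeneous_sum_X.totalDegree hne
  rw [sub_eq_add_neg, totalDegree_add_eq_right_of_totalDegree_lt, totalDegree_neg, hdeg]
  rw [totalDegree_C, totalDegree_neg, hdeg]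
  exact one_pos

theorem expand_two_C_sub_sum_X {σ A : Type*} [Fintype σ] [CommRing A] (r : A) :
    expand 2 (C r - ∑ i, X i : MvPolynomial σ A) = C r - ∑ i, X i ^ 2 := by
  simp only [map_sub, map_sum, expand_C, expand_X]

theorem halfCeil_ball [NeZero n] (R : ℝ) :
    halfCeil (C R - ∑ i : Fin n, X i ^ 2 : MvPolynomial (Fin n) ℝ) = 1 := by
  rw [← expand_two_C_sub_sum_X, halfCeil, totalDegree_expand, totalDegree_C_sub_sum_X]

theorem exists_posDefForms_C_eq_add_ball_mul {R : ℝ} (hR : 0 < R) {k : ℕ}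
    (hk : halfCeil (C R - ∑ i : Fin n, X i ^ 2 : MvPolynomial (Fin n) ℝ) ≤ k)
    {c : ℝ} (hc : 0 < c) :
    ∃ p ∈ posDefForms n k, ∃ q ∈ posDefForms n (k - halfCeil (C R - ∑ i : Fin n, X i ^ 2)),
      C c = p + (C R - ∑ i, X i ^ 2) * q := by
  suffices h : ∃ p q : MvPolynomial (Fin n) ℝ, HasPosCoeffs k p ∧
      HasPosCoeffs (k - halfCeil (C R - ∑ i : Fin n, X i ^ 2)) q ∧
      C c = p + (C R - ∑ i, X i) * q by
    obtain ⟨p, q, hp, hq, hpq⟩ := h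
    refine ⟨_, hp.expand_two_mem_posDefForms, _, hq.expand_two_mem_posDefForms, ?_⟩
    rw [← expand_two_C_sub_sum_X, ← map_mul, ← map_add, ← hpq, expand_C]
  rcases Nat.eq_zero_or_pos n with rfl | hn
  · have hzero (d : ℕ) (α : Fin 0 →₀ ℕ) (_ : α.degree ≤ d) : α = 0 := Subsingleton.elim _ _
    exact ⟨C (c / 2), C (c / (2 * R)), hasPosCoeffs_C (hzero _) (by positivity),
      hasPosCoeffs_C (hzero _) (by positivity), by
      simpa using C_eq_half_add_mul_add_mul hR.ne' c (0 : MvPolynomial (Fin 0) ℝ)⟩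
  · have : NeZero n := ⟨hn.ne'⟩
    rw [halfCeil_ball] at hk ⊢
    obtain ⟨d, rfl⟩ := Nat.exists_eq_add_of_le' hk
    exact exists_hasPosCoeffs_C_eq_add_mul hR d hc

theorem C_mem_truncQuadModuleInterior {ι : Type*} [Fintype ι] {g : ι → MvPolynomial (Fin n) ℝ}
    {j : ι} {R : ℝ} (hR : 0 < R) (hball : g j = C R - ∑ i, X i ^ 2) {k : ℕ}
    (hk : ∀ i, halfCeil (g i) ≤ k) {c : ℝ} (hc : 0 < c) : C c ∈ truncQuadModuleInterior k g := by
  obtain ⟨p, hp, q, hq, hpq⟩ := exists_posDefForms_C_eq_add_ball_mul hR (hball ▸ hk j) hc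
  rw [← hball] at hq hpq
  rw [hpq]
  exact add_mul_mem_truncQuadModuleInterior hk hp j hq

end Ball

/-- If one of the constraints is a ball constraint `g_m = R − ‖x‖₂²` with
`R > 0` (here `g : Fin (m+1) → ℝ[x]` with `g (Fin.last m)` the ball constraint), then for every
`k ≥ max_i ⌈g_i⌉` and every `c > 0` there are symmetric positive definite matrices `G_0` (indexed
by `ℕ^n_k`) and `G_i` (indexed by `ℕ^n_{k-⌈g_i⌉}`) with
`c = v_k^T G_0 v_k + Σ_i g_i · v_{k-⌈g_i⌉}^T G_i v_{k-⌈g_i⌉}`; i.e. `ℝ^{>0} ⊆ Q_k°(g)`. -/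
theorem stmt3 (n m : ℕ) (g : Fin (m + 1) → MvPolynomial (Fin n) ℝ) (R : ℝ) (hR : 0 < R)
    (hball : g (Fin.last m) = C R - ∑ i, X i ^ 2) :
    ∀ k : ℕ, (∀ i, halfCeil (g i) ≤ k) → ∀ c : ℝ, 0 < c →
      ∃ G0 : Matrix ↥(degLE n k) ↥(degLE n k) ℝ, G0.PosDef ∧
      ∃ G : ∀ i : Fin (m + 1),
          Matrix ↥(degLE n (k - halfCeil (g i))) ↥(degLE n (k - halfCeil (g i))) ℝ,
        (∀ i, (G i).PosDef) ∧
        (C c : MvPolynomial (Fin n) ℝ)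
          = quadForm n k G0 + ∑ i, g i * quadForm n (k - halfCeil (g i)) (G i) := by
  intro k hk c hc
  obtain ⟨_, ⟨G0, hG0, rfl⟩, q, hq, hsum⟩ := C_mem_truncQuadModuleInterior hR hball hk hc
  choose G hG hGq using hq
  refine ⟨G0, hG0, G, hG, ?_⟩
  simpa only [hGq] using hsum
end

section
/- Let I_1,…,I_p ⊆ {1,…,n}, let J_1,…,J_p be disjoint finite index sets with polynomials g_i ∈ ℝ[x(I_j)] for i ∈ J_j, and let f = Σ_{j=1}^p f_j with f_j ∈ ℝ[x(I_j)]. Assume that for every j there is some i ∈ J_j with g_i = R_j − ‖x(I_j)‖₂² for some R_j > 0. Then for every integer k ≥ max{⌈f_j⌉, ⌈g_i⌉} there exist a real ξ and symmetric positive definite matrices G_0^{(j)} (indexed by ℕ^{I_j}_k) and G_i^{(j)} (indexed by ℕ^{I_j}_{k-⌈g_i⌉}), i ∈ J_j, j ∈ {1,…,p}, such that f − ξ = Σ_{j=1}^p [ (v_k^{I_j})^T G_0^{(j)} v_k^{I_j} + Σ_{i∈J_j} g_i · (v_{k-⌈g_i⌉}^{I_j})^T G_i^{(j)} v_{k-⌈g_i⌉}^{I_j}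 ] holds in ℝ[x]. (That is, Slater's condition holds for the sparse SOS relaxation of order k.) -/
open MvPolynomial

/-- The finite set `ℕ^I_d` of multi-indices `α` with `|α| ≤ d` supported on `I`. -/
noncomputable def degLEI (n : ℕ) (I : Finset (Fin n)) (d : ℕ) : Finset (Fin n →₀ ℕ) :=
  (degLE n d).filter fun α => α.support ⊆ I

/-- The polynomial `(v_d^I)^T G v_d^I = Σ_{α,β ∈ ℕ^I_d} G_{α,β} x^{α+β}`. -/
noncomputable def quadFormI (n : ℕ) (I : Finset (Fin n)) (d : ℕ)
    (G : Matrix ↥(degLEI n I d) ↥(degLEI n I d) ℝ) : MvPolynomial (Fin n) ℝ :=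
  ∑ α : ↥(degLEI n I d), ∑ β : ↥(degLEI n I d), monomial (α.1 + β.1) (G α β)

/-!
Diagonal Gram matrices represent exactly the polynomials `P(x₁², …, xₙ²)`. For a suitable `W` with
positive coefficients, obtained by letting the coefficients of a geometric series
`∑ t ^ (d - |α|) x ^ α` decrease fast enough with `|α|`, the polynomial `(∑ xᵥ - R) W` has
arbitrarily large nonconstant coefficients. Substituting squares, the ball constraint times a
positive definite form can be traded for an arbitrarily large diagonal Gram matrix, up to a
constant, which `ξ` absorbs. Now give every other constraint the identity matrix, write what remains
of `f_j` as a quadratic form with a symmetric Gram matrix, and make that matrix positive definite by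
adding a large diagonal one.
-/

section Matrix

open scoped ComplexOrder

variable {m 𝕜 : Type*} [Finite m] [DecidableEq m] [RCLike 𝕜]

theorem exists_posSemidef_add_diagonal_const {A : Matrix m m 𝕜} (hA : A.IsHermitian) :
    ∃ c : 𝕜, (A + Matrix.diagonal fun _ => c).PosSemidef := by
  cases nonempty_fintype m
  obtain ⟨r, hr⟩ := (Set.finite_range hA.eigenvalues).bddBelow
  have hscalar : (Matrix.diagonal fun _ => ((-r : ℝ) : 𝕜)) =
      algebraMap 𝕜 (Matrix m m 𝕜) ((-r : ℝ) : 𝕜) := (Matrix.algebraMap_eq_diagonal _).symm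
  refine ⟨((-r : ℝ) : 𝕜), Matrix.posSemidef_iff_isHermitian_and_spectrum_nonneg.2 ⟨?_, ?_⟩⟩
  · refine hA.add (Matrix.isHermitian_diagonal_of_self_adjoint _ ?_)
    exact funext fun _ => RCLike.conj_ofReal _
  · rw [hscalar, ← spectrum.add_singleton_eq, hA.spectrum_eq_image_range]
    rintro _ ⟨_, ⟨_, hl, rfl⟩, _, rfl, rfl⟩
    have hrl := hr hl
    simp only [Set.mem_ofPred_eq, ← RCLike.ofReal_add, RCLike.ofReal_nonneg]
    linarith

theorem exists_forall_le_posDef_add_diagonal {A : Matrix m m 𝕜} (hA : A.IsHermitian) :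
    ∃ c : 𝕜, ∀ u : m → 𝕜, (∀ a, c ≤ u a) → (A + Matrix.diagonal u).PosDef := by
  obtain ⟨c, hc⟩ := exists_posSemidef_add_diagonal_const hA
  refine ⟨c + 1, fun u hu => ?_⟩
  have hsub : (Matrix.diagonal fun a => u a - c).PosDef :=
    Matrix.PosDef.diagonal fun a => sub_pos.2 ((lt_add_one c).trans_le (hu a))
  have hsplit : A + Matrix.diagonal u =
      (A + Matrix.diagonal fun _ => c) + Matrix.diagonal fun a => u a - c := by
    rw [add_assoc, Matrix.diagonal_add]
    simp only [add_sub_cancel]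
  rw [hsplit]
  exact hsub.posSemidef_add hc

end Matrix

section SparsePolynomials

open scoped Pointwise

variable {n : ℕ} {I : Finset (Fin n)} {d e : ℕ}

theorem mem_degLEI {α : Fin n →₀ ℕ} : α ∈ degLEI n I d ↔ α.degree ≤ d ∧ α.support ⊆ I := by
  simp only [degLEI, degLE, Finset.mem_filter, Finset.mem_Iic, ← Finsupp.degree_eq_sum,
    and_congr_left_iff, and_iff_right_iff_imp]
  exact fun _ hα i => (Finsupp.le_degree i α).trans hα

theorem degLEI_mono (h : d ≤ e) : degLEI n I d ⊆ degLEI n I e := fun _ hα =>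
  mem_degLEI.2 ⟨(mem_degLEI.1 hα).1.trans h, (mem_degLEI.1 hα).2⟩

theorem degLEI_add : degLEI n I (d + e) = degLEI n I d + degLEI n I e := by
  ext γ
  simp only [Finset.mem_add, mem_degLEI]
  constructor
  · rintro ⟨hdeg, hsupp⟩
    obtain ⟨α, hαγ, hα⟩ := γ.exists_le_degree_eq (min d γ.degree) (min_le_right _ _)
    have hadd : α + (γ - α) = γ := add_tsub_cancel_of_le hαγ
    have hdegadd : α.degree + (γ - α).degree = γ.degree := by rw [← map_add, hadd]
    exact ⟨α, ⟨by omega, (Finsupp.support_mono hαγ).trans hsupp⟩, γ - α,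
      ⟨by omega, Finsupp.support_tsub.trans hsupp⟩, hadd⟩
  · rintro ⟨α, ⟨hα, hαI⟩, β, ⟨hβ, hβI⟩, rfl⟩
    exact ⟨by rw [map_add]; omega, Finsupp.support_add.trans (Finset.union_subset hαI hβI)⟩

variable (n I d) in
/-- The space `ℝ[x(I)]_d` of polynomials of degree at most `d` in the variables `x_j`, `j ∈ I`,
encoded by requiring all monomials to have exponents in `ℕ^I_d`. For even `d` it is the space of
polynomials that have a Gram matrix. -/
noncomputable def sparsePoly : Submodule ℝ (MvPolynomial (Fin n) ℝ) :=
  restrictSupport ℝ (degLEI n I d : Set (Fin n →₀ ℕ))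

theorem mem_sparsePoly {q : MvPolynomial (Fin n) ℝ} :
    q ∈ sparsePoly n I d ↔ q.support ⊆ degLEI n I d := by
  rw [sparsePoly, mem_restrictSupport_iff, Finset.coe_subset]

theorem mem_sparsePoly_iff_vars_totalDegree {q : MvPolynomial (Fin n) ℝ} :
    q ∈ sparsePoly n I d ↔ q.vars ⊆ I ∧ q.totalDegree ≤ d := by
  classical
  rw [mem_sparsePoly, vars_eq_support_biUnion_support, Finset.biUnion_subset, totalDegree,
    Finset.sup_le_iff, ← forall₂_and]
  exact forall₂_congr fun α _ => mem_degLEI.trans and_comm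

theorem sparsePoly_add : sparsePoly n I (d + e) = sparsePoly n I d * sparsePoly n I e := by
  rw [sparsePoly, degLEI_add, Finset.coe_add, restrictSupport_add]
  rfl

theorem mul_mem_sparsePoly {q r : MvPolynomial (Fin n) ℝ} (hq : q ∈ sparsePoly n I d)
    (hr : r ∈ sparsePoly n I e) : q * r ∈ sparsePoly n I (d + e) :=
  sparsePoly_add (n := n) ▸ Submodule.mul_mem_mul hq hr

theorem C_mem_sparsePoly (c : ℝ) : C c ∈ sparsePoly n I d :=
  mem_sparsePoly_iff_vars_totalDegree.2 (by simp)

theorem mem_sparsePoly_of_halfCeil_le {q : MvPolynomial (Fin n) ℝ} {k : ℕ} (hvars : q.vars ⊆ I)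
    (hk : halfCeil q ≤ k) : q ∈ sparsePoly n I (2 * k) :=
  mem_sparsePoly_iff_vars_totalDegree.2 ⟨hvars, by unfold halfCeil at hk; omega⟩

end SparsePolynomials

section GramMatrices

variable (n : ℕ) (I : Finset (Fin n)) (d : ℕ)

/-- The form `G ↦ (v_d^I)ᵀ G v_d^I` as a linear map, whose range is the space of polynomials
with a Gram matrix. -/
noncomputable def quadFormIₗ :
    Matrix (degLEI n I d) (degLEI n I d) ℝ →ₗ[ℝ] MvPolynomial (Fin n) ℝ where
  toFun := quadFormI n I d
  map_add' G H := by simp only [quadFormI, Matrix.add_apply, map_add, Finset.sum_add_distrib]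
  map_smul' c G := by
    simp only [quadFormI, Matrix.smul_apply, ← smul_monomial, Finset.smul_sum, RingHom.id_apply]

theorem quadFormIₗ_apply (G : Matrix (degLEI n I d) (degLEI n I d) ℝ) :
    quadFormIₗ n I d G = quadFormI n I d G := rfl

variable {n I d}

theorem quadFormI_transpose (G : Matrix (degLEI n I d) (degLEI n I d) ℝ) :
    quadFormI n I d G.transpose = quadFormI n I d G := by
  unfold quadFormI
  rw [Finset.sum_comm]
  simp only [Matrix.transpose_apply, add_comm]

theorem quadFormI_single (α β : degLEI n I d) (c : ℝ) :
    quadFormI n I d (Matrix.single α β c) = monomial (α.1 + β.1) c := by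
  unfold quadFormI
  rw [Fintype.sum_eq_single α, Fintype.sum_eq_single β, Matrix.single_apply_same]
  · intro β' hβ'
    rw [Matrix.single_apply_of_col_ne _ _ hβ'.symm, map_zero]
  · intro α' hα'
    simp only [Matrix.single_apply_of_row_ne hα'.symm, map_zero, Finset.sum_const_zero]

theorem range_quadFormIₗ : LinearMap.range (quadFormIₗ n I d) = sparsePoly n I (d + d) := by
  apply le_antisymm
  · rintro _ ⟨G, rfl⟩
    refine Submodule.sum_mem _ fun α _ => Submodule.sum_mem _ fun β _ => ?_
    refine (monomial_mem_restrictSupport ℝ).2 (.inl ?_)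
    rw [degLEI_add]
    exact Finset.add_mem_add α.2 β.2
  · rw [sparsePoly, degLEI_add, restrictSupport_eq_span, Submodule.span_le, Set.image_subset_iff]
    intro γ hγ
    obtain ⟨α, hα, β, hβ, rfl⟩ := Finset.mem_add.1 hγ
    exact ⟨Matrix.single ⟨α, hα⟩ ⟨β, hβ⟩ 1, quadFormI_single _ _ _⟩

theorem quadFormI_mem_sparsePoly (G : Matrix (degLEI n I d) (degLEI n I d) ℝ) :
    quadFormI n I d G ∈ sparsePoly n I (2 * d) := by
  rw [two_mul, ← range_quadFormIₗ]
  exact ⟨G, rfl⟩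

theorem exists_isSymm_quadFormI_eq {q : MvPolynomial (Fin n) ℝ} (hq : q ∈ sparsePoly n I (2 * d)) :
    ∃ H : Matrix (degLEI n I d) (degLEI n I d) ℝ, H.IsSymm ∧ quadFormI n I d H = q := by
  rw [two_mul, ← range_quadFormIₗ] at hq
  obtain ⟨G, rfl⟩ := hq
  refine ⟨(1 / 2 : ℝ) • (G + G.transpose), (Matrix.isSymm_add_transpose_self G).smul _, ?_⟩
  rw [← quadFormIₗ_apply, map_smul, map_add, quadFormIₗ_apply, quadFormIₗ_apply,
    quadFormI_transpose, ← two_smul ℝ, smul_smul]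
  norm_num

theorem quadFormI_diagonal_coeff {q : MvPolynomial (Fin n) ℝ} (hq : q ∈ sparsePoly n I d) :
    quadFormI n I d (Matrix.diagonal fun α => coeff α.1 q) = expand 2 q := by
  have hdiag (α : degLEI n I d) : ∑ β : degLEI n I d,
      monomial (α.1 + β.1) (Matrix.diagonal (fun α => coeff α.1 q) α β) =
        expand 2 (monomial α.1 (coeff α.1 q)) := by
    rw [Fintype.sum_eq_single α fun β hβ => by rw [Matrix.diagonal_apply_ne _ hβ.symm, map_zero],
      Matrix.diagonal_apply_eq, expand_monomial, two_smul]
  calc quadFormI n I d (Matrix.diagonal fun α => coeff α.1 q)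
      = ∑ α ∈ degLEI n I d, expand 2 (monomial α (coeff α q)) := by
        simp only [quadFormI, hdiag]
        exact Finset.sum_coe_sort _ fun α => expand 2 (monomial α (coeff α q))
    _ = expand 2 (∑ α ∈ q.support, monomial α (coeff α q)) := by
        rw [map_sum]
        refine (Finset.sum_subset (mem_sparsePoly.1 hq) fun α _ hα => ?_).symm
        rw [notMem_support_iff.1 hα, map_zero, map_zero]
    _ = expand 2 q := by rw [support_sum_monomial_coeff]

end GramMatrices

section GeometricWeights

variable (n : ℕ) (I : Finset (Fin n)) (d : ℕ)

/-- The truncated geometric series `∑_{α ∈ ℕ^I_d} t ^ (d - |α|) x ^ α`, homogenized so that no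
negative powers of `t` occur. For large `t` it serves, up to scaling, as the multiplier `W` of the
ball constraint. -/
noncomputable def geomPoly (t : ℝ) : MvPolynomial (Fin n) ℝ :=
  ∑ α ∈ degLEI n I d, monomial α (t ^ (d - α.degree))

variable {n I d}

theorem coeff_geomPoly (t : ℝ) (β : Fin n →₀ ℕ) :
    coeff β (geomPoly n I d t) = if β ∈ degLEI n I d then t ^ (d - β.degree) else 0 := by
  simp only [geomPoly, coeff_sum, coeff_monomial, Finset.sum_ite_eq']

theorem geomPoly_mem_sparsePoly (t : ℝ) : geomPoly n I d t ∈ sparsePoly n I d :=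
  Submodule.sum_mem _ fun _ hα => (monomial_mem_restrictSupport ℝ).2 (.inl hα)

theorem coeff_geomPoly_nonneg {t : ℝ} (ht : 0 ≤ t) (β : Fin n →₀ ℕ) :
    0 ≤ coeff β (geomPoly n I d t) := by
  rw [coeff_geomPoly]
  positivity

theorem pow_le_coeff_sum_X_mul_geomPoly {t : ℝ} (ht : 0 ≤ t) {β : Fin n →₀ ℕ}
    (hβ : β ∈ degLEI n I (d + 1)) (hβ0 : β ≠ 0) :
    t ^ (d + 1 - β.degree) ≤ coeff β ((∑ v ∈ I, X v) * geomPoly n I d t) := by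
  obtain ⟨hdeg, hsupp⟩ := mem_degLEI.1 hβ
  obtain ⟨v, hv⟩ := Finsupp.support_nonempty_iff.2 hβ0
  have hle : Finsupp.single v 1 ≤ β :=
    Finsupp.single_le_iff.2 (Nat.one_le_iff_ne_zero.2 (Finsupp.mem_support_iff.1 hv))
  have hdegsub : 1 + (β - Finsupp.single v 1).degree = β.degree := by
    simpa only [map_add, Finsupp.degree_single] using
      congrArg Finsupp.degree (add_tsub_cancel_of_le hle)
  have hmem : β - Finsupp.single v 1 ∈ degLEI n I d :=
    mem_degLEI.2 ⟨by omega, Finsupp.support_tsub.trans hsupp⟩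
  calc t ^ (d + 1 - β.degree) = coeff β (X v * geomPoly n I d t) := by
        rw [coeff_X_mul', if_pos hv, coeff_geomPoly, if_pos hmem]
        congr 1
        omega
    _ ≤ ∑ w ∈ I, coeff β (X w * geomPoly n I d t) := by
        refine Finset.single_le_sum (f := fun w => coeff β (X w * geomPoly n I d t))
          (fun w _ => ?_) (hsupp hv)
        rw [coeff_X_mul']
        split_ifs
        exacts [coeff_geomPoly_nonneg ht _, le_rfl]
    _ = coeff β ((∑ w ∈ I, X w) * geomPoly n I d t) := by rw [Finset.sum_mul, coeff_sum]

theorem one_le_coeff_sum_X_sub_C_mul_geomPoly {R t : ℝ} (ht : 1 ≤ t) (hRt : R + 1 ≤ t)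
    {β : Fin n →₀ ℕ} (hβ : β ∈ degLEI n I (d + 1)) (hβ0 : β ≠ 0) :
    1 ≤ coeff β ((∑ v ∈ I, X v - C R) * geomPoly n I d t) := by
  obtain ⟨hdeg, hsupp⟩ := mem_degLEI.1 hβ
  have hpow := pow_le_coeff_sum_X_mul_geomPoly (zero_le_one.trans ht) hβ hβ0
  rw [sub_mul, coeff_sub, coeff_C_mul, coeff_geomPoly]
  split_ifs with hβd
  · have hone : 1 ≤ t ^ (d - β.degree) := one_le_pow₀ ht
    have hdom : 1 ≤ t ^ (d - β.degree) * (t - R) :=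
      one_le_mul_of_one_le_of_one_le hone (by linarith)
    rw [Nat.succ_sub (mem_degLEI.1 hβd).1, pow_succ] at hpow
    linarith
  · have hβdeg : β.degree = d + 1 := by
      by_contra hne
      exact hβd (mem_degLEI.2 ⟨by omega, hsupp⟩)
    simpa [hβdeg] using hpow

variable (n I d) in
theorem exists_pos_coeff_and_le_coeff_sum_X_sub_C_mul (R M : ℝ) :
    ∃ W ∈ sparsePoly n I d, (∀ α ∈ degLEI n I d, 0 < coeff α W) ∧
      ∀ β ∈ degLEI n I (d + 1), β ≠ 0 → M ≤ coeff β ((∑ v ∈ I, X v - C R) * W) := by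
  set t := max 1 (R + 1)
  have ht : 1 ≤ t := le_max_left _ _
  refine ⟨max M 1 • geomPoly n I d t, Submodule.smul_mem _ _ (geomPoly_mem_sparsePoly t),
    fun α hα => ?_, fun β hβ hβ0 => ?_⟩
  · rw [coeff_smul, coeff_geomPoly, if_pos hα, smul_eq_mul]
    positivity
  · have hone := one_le_coeff_sum_X_sub_C_mul_geomPoly ht (le_max_right _ _) hβ hβ0
    rw [mul_smul_comm, coeff_smul, smul_eq_mul]
    exact (le_max_left M 1).trans (le_mul_of_one_le_right (by positivity) hone)

end GeometricWeights

section Slater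

variable {n : ℕ} {I : Finset (Fin n)}

theorem ball_eq_neg_expand (R : ℝ) :
    (C R - ∑ v ∈ I, X v ^ 2 : MvPolynomial (Fin n) ℝ) = -expand 2 (∑ v ∈ I, X v - C R) := by
  simp only [map_sub, map_sum, expand_X, expand_C, neg_sub]

theorem halfCeil_neg_expand_two (q : MvPolynomial (Fin n) ℝ) :
    halfCeil (-expand 2 q) = q.totalDegree := by
  rw [halfCeil, totalDegree_neg, totalDegree_expand]
  omega

theorem sum_X_sub_C_mem_sparsePoly (R : ℝ) : ∑ v ∈ I, X v - C R ∈ sparsePoly n I 1 := by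
  refine Submodule.sub_mem _ (Submodule.sum_mem _ fun v hv => ?_) (C_mem_sparsePoly R)
  exact mem_sparsePoly_iff_vars_totalDegree.2 (by simpa using hv)

theorem exists_posDef_sub_C_eq_quadFormI_add_ball_mul {R : ℝ} {d k : ℕ}
    (hdk : d + halfCeil (C R - ∑ v ∈ I, X v ^ 2 : MvPolynomial (Fin n) ℝ) = k)
    {h : MvPolynomial (Fin n) ℝ} (hh : h ∈ sparsePoly n I (2 * k)) :
    ∃ (ξ : ℝ) (G₀ : Matrix (degLEI n I k) (degLEI n I k) ℝ)
      (G₁ : Matrix (degLEI n I d) (degLEI n I d) ℝ),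
      G₀.PosDef ∧ G₁.PosDef ∧
        h - C ξ = quadFormI n I k G₀ + (C R - ∑ v ∈ I, X v ^ 2) * quadFormI n I d G₁ := by
  rw [ball_eq_neg_expand, halfCeil_neg_expand_two] at hdk
  rw [ball_eq_neg_expand]
  obtain ⟨hLvars, hLdeg⟩ :=
    mem_sparsePoly_iff_vars_totalDegree.1 (sum_X_sub_C_mem_sparsePoly (I := I) R)
  obtain ⟨H, hHsymm, rfl⟩ := exists_isSymm_quadFormI_eq hh
  obtain ⟨c, hc⟩ := exists_forall_le_posDef_add_diagonal (𝕜 := ℝ) (A := H) hHsymm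
  obtain ⟨W, hW, hWpos, hLW⟩ := exists_pos_coeff_and_le_coeff_sum_X_sub_C_mul n I d R c
  set L : MvPolynomial (Fin n) ℝ := ∑ v ∈ I, X v - C R
  set ξ : ℝ := coeff 0 (L * W) - c
  have hP : L * W - C ξ ∈ sparsePoly n I k := by
    have hmul := mul_mem_sparsePoly (mem_sparsePoly_iff_vars_totalDegree.2 ⟨hLvars, le_rfl⟩) hW
    rw [add_comm, hdk] at hmul
    exact Submodule.sub_mem _ hmul (C_mem_sparsePoly ξ)
  have hPcoeff (β : degLEI n I k) : c ≤ coeff β.1 (L * W - C ξ) := by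
    rw [coeff_sub, coeff_C]
    split_ifs with hβ
    · rw [← hβ, sub_sub_cancel]
    · rw [sub_zero]
      exact hLW β (degLEI_mono (by omega) β.2) (Ne.symm hβ)
  have hexpand : expand 2 (L * W - C ξ) = expand 2 L * expand 2 W - C ξ := by
    rw [map_sub, map_mul, expand_C]
  refine ⟨ξ, H + Matrix.diagonal fun β => coeff β.1 (L * W - C ξ),
    Matrix.diagonal fun α => coeff α.1 W, hc _ hPcoeff,
    Matrix.PosDef.diagonal fun α => hWpos α α.2, ?_⟩
  rw [← quadFormIₗ_apply n I k (H + _), map_add, quadFormIₗ_apply, quadFormIₗ_apply,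
    quadFormI_diagonal_coeff hP, quadFormI_diagonal_coeff hW, hexpand]
  ring

theorem exists_posDef_sub_C_eq_of_exists_ball {ι : Type*} {J : Finset ι}
    {g : ι → MvPolynomial (Fin n) ℝ} (hg : ∀ i ∈ J, (g i).vars ⊆ I)
    {f : MvPolynomial (Fin n) ℝ} (hf : f.vars ⊆ I)
    (hball : ∃ i ∈ J, ∃ R : ℝ, g i = C R - ∑ v ∈ I, X v ^ 2)
    {k : ℕ} (hfk : halfCeil f ≤ k) (hgk : ∀ i ∈ J, halfCeil (g i) ≤ k) :
    ∃ (ξ : ℝ) (G₀ : Matrix (degLEI n I k) (degLEI n I k) ℝ)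
      (G : ∀ i, Matrix (degLEI n I (k - halfCeil (g i))) (degLEI n I (k - halfCeil (g i))) ℝ),
      G₀.PosDef ∧ (∀ i, (G i).PosDef) ∧
        f - C ξ = quadFormI n I k G₀ + ∑ i ∈ J, g i * quadFormI n I (k - halfCeil (g i)) (G i) := by
  classical
  obtain ⟨i₀, hi₀, R, hR⟩ := hball
  set q := ∑ i ∈ J.erase i₀, g i * quadFormI n I (k - halfCeil (g i)) 1
  have hq : q ∈ sparsePoly n I (2 * k) := by
    refine Submodule.sum_mem _ fun i hi => ?_
    have hiJ := Finset.mem_of_mem_erase hi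
    have hmul := mul_mem_sparsePoly (mem_sparsePoly_of_halfCeil_le (hg i hiJ) le_rfl)
      (quadFormI_mem_sparsePoly (1 : Matrix (degLEI n I (k - halfCeil (g i))) _ ℝ))
    rwa [← mul_add, add_tsub_cancel_of_le (hgk i hiJ)] at hmul
  have hfq : f - q ∈ sparsePoly n I (2 * k) :=
    Submodule.sub_mem _ (mem_sparsePoly_of_halfCeil_le hf hfk) hq
  have hdk : k - halfCeil (g i₀) +
      halfCeil (C R - ∑ v ∈ I, X v ^ 2 : MvPolynomial (Fin n) ℝ) = k := by
    rw [← hR, Nat.sub_add_cancel (hgk i₀ hi₀)]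
  obtain ⟨ξ, G₀, G₁, hG₀, hG₁, hdecomp⟩ :=
    exists_posDef_sub_C_eq_quadFormI_add_ball_mul hdk hfq
  rw [← hR] at hdecomp
  let G : ∀ i, Matrix (degLEI n I (k - halfCeil (g i))) (degLEI n I (k - halfCeil (g i))) ℝ :=
    Function.update (fun _ => 1) i₀ G₁
  have hGself : G i₀ = G₁ := Function.update_self ..
  have hGne {i : ι} (hi : i ≠ i₀) : G i = 1 := Function.update_of_ne hi ..
  refine ⟨ξ, G₀, G, hG₀, fun i => ?_, ?_⟩
  · obtain rfl | hi := eq_or_ne i i₀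
    · rwa [hGself]
    · rw [hGne hi]
      exact Matrix.PosDef.one
  · have hrest : ∑ i ∈ J.erase i₀, g i * quadFormI n I (k - halfCeil (g i)) (G i) = q :=
      Finset.sum_congr rfl fun i hi => by rw [hGne (Finset.ne_of_mem_erase hi)]
    rw [← Finset.add_sum_erase _ _ hi₀, hrest, hGself]
    linear_combination hdecomp

theorem stmt11_general {κ ι : Type*} [Fintype κ] (I : κ → Finset (Fin n)) (J : κ → Finset ι)
    (g : ι → MvPolynomial (Fin n) ℝ) (hgvars : ∀ j, ∀ i ∈ J j, (g i).vars ⊆ I j)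
    (f : κ → MvPolynomial (Fin n) ℝ) (hfvars : ∀ j, (f j).vars ⊆ I j)
    (hball : ∀ j, ∃ i ∈ J j, ∃ R : ℝ, g i = C R - ∑ v ∈ I j, X v ^ 2)
    (k : ℕ) (hfk : ∀ j, halfCeil (f j) ≤ k) (hgk : ∀ j, ∀ i ∈ J j, halfCeil (g i) ≤ k) :
    ∃ ξ : ℝ,
    ∃ G₀ : ∀ j, Matrix (degLEI n (I j) k) (degLEI n (I j) k) ℝ,
      (∀ j, (G₀ j).PosDef) ∧
    ∃ G : ∀ j i, Matrix (degLEI n (I j) (k - halfCeil (g i)))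
        (degLEI n (I j) (k - halfCeil (g i))) ℝ,
      (∀ j, ∀ i ∈ J j, (G j i).PosDef) ∧
      (∑ j, f j) - C ξ
        = ∑ j, (quadFormI n (I j) k (G₀ j)
            + ∑ i ∈ J j, g i * quadFormI n (I j) (k - halfCeil (g i)) (G j i)) := by
  choose ξ G₀ G hG₀ hG hdecomp using fun j =>
    exists_posDef_sub_C_eq_of_exists_ball (hgvars j) (hfvars j) (hball j) (hfk j) (hgk j)
  refine ⟨∑ j, ξ j, G₀, hG₀, G, fun j i _ => hG j i, ?_⟩
  rw [map_sum, ← Finset.sum_sub_distrib]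
  exact Finset.sum_congr rfl fun j _ => hdecomp j

end Slater

/-- Slater's condition for the sparse SOS relaxation: with correlative
sparsity pattern `(I_j, J_j)`, `f = Σ_j f_j` (`f_j ∈ ℝ[x(I_j)]`) and a ball constraint
`R_j − ‖x(I_j)‖₂² ∈ g_{J_j}` on each clique, for every order `k` there exist `ξ ∈ ℝ` and
symmetric positive definite matrices `G_0^{(j)}`, `G_i^{(j)}` with
`f − ξ = Σ_j [ (v_k^{I_j})^T G_0^{(j)} v_k^{I_j}
    + Σ_{i∈J_j} g_i (v_{k-⌈g_i⌉}^{I_j})^T G_i^{(j)} v_{k-⌈g_i⌉}^{I_j} ]`. -/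
theorem stmt11 (n p : ℕ) {ι : Type} [DecidableEq ι]
    (I : Fin p → Finset (Fin n)) (J : Fin p → Finset ι)
    (hdisj : ∀ j j' : Fin p, j ≠ j' → Disjoint (J j) (J j'))
    (g : ι → MvPolynomial (Fin n) ℝ)
    (hgvars : ∀ j : Fin p, ∀ i ∈ J j, (g i).vars ⊆ I j)
    (f : Fin p → MvPolynomial (Fin n) ℝ)
    (hfvars : ∀ j : Fin p, (f j).vars ⊆ I j)
    (hball : ∀ j : Fin p, ∃ i ∈ J j, ∃ Rj : ℝ, 0 < Rj ∧
      g i = C Rj - ∑ v ∈ I j, X v ^ 2) :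
    ∀ k : ℕ, (∀ j, halfCeil (f j) ≤ k) → (∀ j : Fin p, ∀ i ∈ J j, halfCeil (g i) ≤ k) →
      ∃ ξ : ℝ,
      ∃ G0 : ∀ j : Fin p, Matrix ↥(degLEI n (I j) k) ↥(degLEI n (I j) k) ℝ,
        (∀ j, (G0 j).PosDef) ∧
      ∃ G : ∀ (j : Fin p) (i : ι),
          Matrix ↥(degLEI n (I j) (k - halfCeil (g i)))
            ↥(degLEI n (I j) (k - halfCeil (g i))) ℝ,
        (∀ j : Fin p, ∀ i ∈ J j, (G j i).PosDef) ∧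
        (∑ j, f j) - C ξ
          = ∑ j, (quadFormI n (I j) k (G0 j)
              + ∑ i ∈ J j, g i * quadFormI n (I j) (k - halfCeil (g i)) (G j i)) := by
  exact fun k => stmt11_general I J g hgvars f hfvars
    (fun j => (hball j).imp fun _ => And.imp_right fun ⟨R, _, hR⟩ => ⟨R, hR⟩) k
end
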